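/- Let C be a category with pullbacks which has Kähler differentials, and let X be an object of C. If Ω_X is a zero object in Ab(C/X), then X is formally unramified. -/

import Mathlib

open CategoryTheory CategoryTheory.Limits

universe v u

/-- A Beck module over `Y`: an abelian group object in the overcategory `C/Y`,
presented by its underlying morphism `φ : M ⟶ Y`, a unit (zero) section `unit`,
an addition `add` over `Y`, and a negation `neg` over `Y`, satisfying the abelian
group axioms on generalized elements (equivalently, via Yoneda, making it an
abelian group object of `C/Y`). -/
structure BeckModule {C : Type u} [Category.{v} C] [HasPullbacks C] (Y : C) where
  M : C
  φ : M ⟶ Y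
  unit : Y ⟶ M
  unit_φ : unit ≫ φ = 𝟙 Y
  add : pullback φ φ ⟶ M
  add_φ : add ≫ φ = pullback.fst φ φ ≫ φ
  neg : M ⟶ M
  neg_φ : neg ≫ φ = φ
  add_assoc : ∀ {T : C} (a b c : T ⟶ M) (hab : a ≫ φ = b ≫ φ) (hbc : b ≫ φ = c ≫ φ),
    pullback.lift (pullback.lift a b hab ≫ add) c
        (by rw [Category.assoc, add_φ, ← Category.assoc, pullback.lift_fst, hab, hbc]) ≫ add =
      pullback.lift a (pullback.lift b c hbc ≫ add)
        (by rw [Category.assoc, add_φ, ← Category.assoc, pullback.lift_fst, hab]) ≫ add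
  add_comm : ∀ {T : C} (a b : T ⟶ M) (h : a ≫ φ = b ≫ φ),
    pullback.lift a b h ≫ add = pullback.lift b a h.symm ≫ add
  zero_add : ∀ {T : C} (a : T ⟶ M),
    pullback.lift (a ≫ φ ≫ unit) a
        (by rw [Category.assoc, Category.assoc, unit_φ, Category.comp_id]) ≫ add = a
  add_neg : ∀ {T : C} (a : T ⟶ M),
    pullback.lift a (a ≫ neg) (by rw [Category.assoc, neg_φ]) ≫ add = a ≫ φ ≫ unit

/-- A Beck torsor structure on `γ : Z ⟶ Y`: `γ` is an effective epimorphism, equipped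
with a Beck module `mod` over `Y` and a group action `τ : M ×_Y Z ⟶ Z` in `C/Y`
(satisfying the unit and associativity axioms for an action of the group object `M`),
such that the shear morphism `(τ, π_Z) : M ×_Y Z ⟶ Z ×_Y Z` is an isomorphism in `C/Y`. -/
structure BeckTorsor {C : Type u} [Category.{v} C] [HasPullbacks C] {Z Y : C} (γ : Z ⟶ Y) where
  mod : BeckModule Y
  effEpi : EffectiveEpi γ
  τ : pullback mod.φ γ ⟶ Z
  τ_γ : τ ≫ γ = pullback.snd mod.φ γ ≫ γ
  act_unit : ∀ {T : C} (z : T ⟶ Z),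
    pullback.lift (z ≫ γ ≫ mod.unit) z
        (by rw [Category.assoc, Category.assoc, mod.unit_φ, Category.comp_id]) ≫ τ = z
  act_assoc : ∀ {T : C} (a b : T ⟶ mod.M) (z : T ⟶ Z)
      (hab : a ≫ mod.φ = b ≫ mod.φ) (hbz : b ≫ mod.φ = z ≫ γ),
    pullback.lift (pullback.lift a b hab ≫ mod.add) z
        (by rw [Category.assoc, mod.add_φ, ← Category.assoc, pullback.lift_fst, hab, hbz]) ≫ τ =
      pullback.lift a (pullback.lift b z hbz ≫ τ)
        (by rw [Category.assoc, τ_γ, ← Category.assoc, pullback.lift_snd, hab, hbz]) ≫ τ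
  shear_iso : IsIso (pullback.lift τ (pullback.snd mod.φ γ) τ_γ :
    pullback mod.φ γ ⟶ pullback γ γ)

/-- An object `X` is formally unramified if, for every Beck torsor `γ : Z ⟶ Y` in `C`,
the canonical map `Hom(X, Z) → Hom(X, Y)` given by composition with `γ` is injective. -/
def FormallyUnramified {C : Type u} [Category.{v} C] [HasPullbacks C] (X : C) : Prop :=
  ∀ ⦃Z Y : C⦄ (γ : Z ⟶ Y), BeckTorsor γ →
    Function.Injective (fun ψ : X ⟶ Z => ψ ≫ γ)

/-- A morphism of Beck modules over `Y`: a morphism over `Y` commuting with the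
addition (i.e. a morphism of abelian group objects in `C/Y`). -/
@[ext]
structure BeckModuleHom {C : Type u} [Category.{v} C] [HasPullbacks C] {Y : C}
    (N₁ N₂ : BeckModule Y) where
  f : N₁.M ⟶ N₂.M
  w : f ≫ N₂.φ = N₁.φ
  map_add : ∀ {T : C} (a b : T ⟶ N₁.M) (h : a ≫ N₁.φ = b ≫ N₁.φ),
    (pullback.lift a b h ≫ N₁.add) ≫ f =
      pullback.lift (a ≫ f) (b ≫ f)
        (by rw [Category.assoc, Category.assoc, w, h]) ≫ N₂.add

/-- The category `Ab(C/Y)` of Beck modules over `Y`. -/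
instance BeckModule.category {C : Type u} [Category.{v} C] [HasPullbacks C] (Y : C) :
    Category (BeckModule Y) where
  Hom := BeckModuleHom
  id N := ⟨𝟙 N.M, Category.id_comp _, by intro T a b h; simp⟩
  comp {N₁ N₂ N₃} f g := ⟨f.f ≫ g.f, by rw [Category.assoc, g.w, f.w], by
    intro T a b h
    rw [← Category.assoc, f.map_add, g.map_add]
    simp⟩
  id_comp f := by apply BeckModuleHom.ext; simp
  comp_id f := by apply BeckModuleHom.ext; simp
  assoc f g h := by apply BeckModuleHom.ext; simp

/-- The forgetful functor `Ab(C/Y) ⥤ C/Y`. -/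
def forgetBeck {C : Type u} [Category.{v} C] [HasPullbacks C] (Y : C) :
    BeckModule Y ⥤ Over Y where
  obj N := Over.mk N.φ
  map {N₁ N₂} f := Over.homMk f.f f.w
  map_id N := by ext; simp; rfl
  map_comp f g := by ext; simp; rfl

/-!
Two maps `ψ₁ ψ₂ : X ⟶ Z` that agree over `Y` differ by the action of a unique `m : X ⟶ M`, where `M`
is the Beck module of the torsor. Such an `m` is a section of the base change of `M` along `X ⟶ Y`,
and sections of a Beck module over `X` correspond to its homomorphisms out of `Ω_X`. When `Ω_X` is
zero there is only one, so `m` is the zero section and `ψ₁ = ψ₂`.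
-/

section

variable {C : Type u} [Category.{v} C] [HasPullbacks C] {X Y T : C}

namespace BeckModule

/-- The sum in `N` of two generalized elements lying over the same morphism `T ⟶ Y`. -/
noncomputable abbrev sum (N : BeckModule Y) (a b : T ⟶ N.M) (h : a ≫ N.φ = b ≫ N.φ) : T ⟶ N.M :=
  pullback.lift a b h ≫ N.add

theorem sum_φ (N : BeckModule Y) (a b : T ⟶ N.M) (h : a ≫ N.φ = b ≫ N.φ) :
    N.sum a b h ≫ N.φ = a ≫ N.φ := by
  rw [Category.assoc, N.add_φ, pullback.lift_fst_assoc]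

theorem comp_sum (N : BeckModule Y) {S : C} (s : S ⟶ T) (a b : T ⟶ N.M)
    (h : a ≫ N.φ = b ≫ N.φ) :
    s ≫ N.sum a b h = N.sum (s ≫ a) (s ≫ b) (by simp only [Category.assoc, h]) := by
  rw [← Category.assoc]
  congr 1
  apply pullback.hom_ext <;>
    simp only [Category.assoc, pullback.lift_fst, pullback.lift_snd]

theorem fst_φ_eq_of_snd_eq (N : BeckModule Y) (f : X ⟶ Y) {a b : T ⟶ pullback N.φ f}
    (h : a ≫ pullback.snd N.φ f = b ≫ pullback.snd N.φ f) :
    (a ≫ pullback.fst N.φ f) ≫ N.φ = (b ≫ pullback.fst N.φ f) ≫ N.φ := by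
  simp only [Category.assoc, pullback.condition, reassoc_of% h]

/-- The addition of the base change of `N` along `f`: add the components in `N` and keep the
common component in `X`. -/
noncomputable def baseChangeAdd (N : BeckModule Y) (f : X ⟶ Y) :
    pullback (pullback.snd N.φ f) (pullback.snd N.φ f) ⟶ pullback N.φ f :=
  pullback.lift
    (N.sum (pullback.fst _ _ ≫ pullback.fst N.φ f) (pullback.snd _ _ ≫ pullback.fst N.φ f)
      (N.fst_φ_eq_of_snd_eq f pullback.condition))
    (pullback.fst _ _ ≫ pullback.snd N.φ f)
    (by rw [sum_φ, Category.assoc, Category.assoc, pullback.condition])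

theorem lift_baseChangeAdd_fst (N : BeckModule Y) (f : X ⟶ Y) (a b : T ⟶ pullback N.φ f)
    (h : a ≫ pullback.snd N.φ f = b ≫ pullback.snd N.φ f) :
    (pullback.lift a b h ≫ N.baseChangeAdd f) ≫ pullback.fst N.φ f =
      N.sum (a ≫ pullback.fst N.φ f) (b ≫ pullback.fst N.φ f) (N.fst_φ_eq_of_snd_eq f h) := by
  rw [baseChangeAdd, Category.assoc, pullback.lift_fst, comp_sum]
  simp only [pullback.lift_fst_assoc, pullback.lift_snd_assoc]

theorem lift_baseChangeAdd_snd (N : BeckModule Y) (f : X ⟶ Y) (a b : T ⟶ pullback N.φ f)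
    (h : a ≫ pullback.snd N.φ f = b ≫ pullback.snd N.φ f) :
    (pullback.lift a b h ≫ N.baseChangeAdd f) ≫ pullback.snd N.φ f =
      a ≫ pullback.snd N.φ f := by
  rw [baseChangeAdd, Category.assoc, pullback.lift_snd, pullback.lift_fst_assoc]

/-- The base change of a Beck module along `f : X ⟶ Y`, with underlying morphism
`M ×_Y X ⟶ X`. -/
noncomputable def baseChange (N : BeckModule Y) (f : X ⟶ Y) : BeckModule X where
  M := pullback N.φ f
  φ := pullback.snd N.φ f
  unit := pullback.lift (f ≫ N.unit) (𝟙 X) (by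
    rw [Category.assoc, N.unit_φ, Category.comp_id, Category.id_comp])
  unit_φ := pullback.lift_snd _ _ _
  add := N.baseChangeAdd f
  add_φ := pullback.lift_snd _ _ _
  neg := pullback.lift (pullback.fst _ _ ≫ N.neg) (pullback.snd _ _) (by
    rw [Category.assoc, N.neg_φ, pullback.condition])
  neg_φ := pullback.lift_snd _ _ _
  add_assoc a b c hab hbc := by
    apply pullback.hom_ext
    · simp only [lift_baseChangeAdd_fst]
      exact N.add_assoc _ _ _ (N.fst_φ_eq_of_snd_eq f hab) (N.fst_φ_eq_of_snd_eq f hbc)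
    · simp only [lift_baseChangeAdd_snd]
  add_comm a b h := by
    apply pullback.hom_ext
    · simp only [lift_baseChangeAdd_fst]
      exact N.add_comm _ _ _
    · simp only [lift_baseChangeAdd_snd, h]
  zero_add a := by
    apply pullback.hom_ext
    · rw [lift_baseChangeAdd_fst]
      simp only [Category.assoc, pullback.lift_fst, ← pullback.condition_assoc]
      simpa only [Category.assoc] using N.zero_add (a ≫ pullback.fst N.φ f)
    · rw [lift_baseChangeAdd_snd]
      simp only [Category.assoc, pullback.lift_snd, Category.comp_id]
  add_neg a := by
    apply pullback.hom_ext
    · rw [lift_baseChangeAdd_fst]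
      simp only [Category.assoc, pullback.lift_fst, ← pullback.condition_assoc]
      simpa only [Category.assoc] using N.add_neg (a ≫ pullback.fst N.φ f)
    · rw [lift_baseChangeAdd_snd]
      simp only [Category.assoc, pullback.lift_snd, Category.comp_id]

/-- The section of the base change of `N` along `f : X ⟶ Y` determined by a lift `m : X ⟶ N.M` of
`f`; sections are encoded as morphisms in `C/X` out of the terminal object `𝟙 X`. -/
noncomputable def sectionOfLift (N : BeckModule Y) (m : X ⟶ N.M) (f : X ⟶ Y) (h : m ≫ N.φ = f) :
    Over.mk (𝟙 X) ⟶ (forgetBeck X).obj (N.baseChange f) :=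
  Over.homMk (pullback.lift m (𝟙 X) (h.trans (Category.id_comp f).symm))
    (pullback.lift_snd _ _ _)

theorem sectionOfLift_left_fst (N : BeckModule Y) (m : X ⟶ N.M) (f : X ⟶ Y) (h : m ≫ N.φ = f) :
    (N.sectionOfLift m f h).left ≫ pullback.fst N.φ f = m :=
  pullback.lift_fst _ _ _

theorem hom_ext_of_subsingleton_sections
    (hX : ∀ M : BeckModule X, Subsingleton (Over.mk (𝟙 X) ⟶ (forgetBeck X).obj M))
    (N : BeckModule Y) {m n : X ⟶ N.M} (h : m ≫ N.φ = n ≫ N.φ) : m = n := by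
  have sections_eq : N.sectionOfLift m (n ≫ N.φ) h = N.sectionOfLift n (n ≫ N.φ) rfl :=
    (hX _).elim _ _
  rw [← N.sectionOfLift_left_fst m _ h, sections_eq, sectionOfLift_left_fst]

end BeckModule

theorem BeckTorsor.exists_lift_τ_eq {Z : C} {γ : Z ⟶ Y} (t : BeckTorsor γ) {ψ₁ ψ₂ : T ⟶ Z}
    (h : ψ₁ ≫ γ = ψ₂ ≫ γ) :
    ∃ (m : T ⟶ t.mod.M) (hm : m ≫ t.mod.φ = ψ₂ ≫ γ), pullback.lift m ψ₂ hm ≫ t.τ = ψ₁ := by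
  have := t.shear_iso
  let shear := pullback.lift t.τ (pullback.snd t.mod.φ γ) t.τ_γ
  obtain ⟨p, hp⟩ : ∃ p, p ≫ shear = pullback.lift ψ₁ ψ₂ h :=
    ⟨pullback.lift ψ₁ ψ₂ h ≫ inv shear, by rw [Category.assoc, IsIso.inv_hom_id, Category.comp_id]⟩
  have p_τ : p ≫ t.τ = ψ₁ := by
    rw [← pullback.lift_fst ψ₁ ψ₂ h, ← hp, Category.assoc, pullback.lift_fst]
  have p_snd : p ≫ pullback.snd t.mod.φ γ = ψ₂ := by
    rw [← pullback.lift_snd ψ₁ ψ₂ h, ← hp, Category.assoc, pullback.lift_snd]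
  refine ⟨p ≫ pullback.fst t.mod.φ γ, by rw [Category.assoc, pullback.condition, reassoc_of% p_snd],
    ?_⟩
  rw [← p_τ]
  congr 1
  apply pullback.hom_ext
  · rw [pullback.lift_fst]
  · rw [pullback.lift_snd, p_snd]

theorem formallyUnramified_of_subsingleton_sections
    (hX : ∀ M : BeckModule X, Subsingleton (Over.mk (𝟙 X) ⟶ (forgetBeck X).obj M)) :
    FormallyUnramified X := by
  intro Z Y γ t ψ₁ ψ₂ h
  obtain ⟨m, hm, rfl⟩ := t.exists_lift_τ_eq h
  obtain rfl : m = ψ₂ ≫ γ ≫ t.mod.unit := t.mod.hom_ext_of_subsingleton_sections hX (by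
    rw [hm, Category.assoc, Category.assoc, t.mod.unit_φ, Category.comp_id])
  exact t.act_unit ψ₂

theorem formallyUnramified_of_isZero_kaehler_general {Ω : Over X ⥤ BeckModule X}
    (adj : Ω ⊣ forgetBeck X) (hz : IsZero (Ω.obj (Over.mk (𝟙 X)))) : FormallyUnramified X :=
  formallyUnramified_of_subsingleton_sections fun N =>
    have : Subsingleton (Ω.obj (Over.mk (𝟙 X)) ⟶ N) := ⟨hz.eq_of_src⟩
    (adj.homEquiv _ N).symm.subsingleton

end

/-- If `C` has Kähler differentials (each forgetful functor `Ab(C/Y) ⥤ C/Y` has a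
left adjoint `Ω`), and `Ω_X = Ω(𝟙 X)` is a zero object in `Ab(C/X)`, then `X` is
formally unramified. -/
theorem formallyUnramified_of_isZero_kaehler {C : Type u} [Category.{v} C]
    [HasPullbacks C] (Ω : ∀ Y : C, Over Y ⥤ BeckModule Y)
    (adj : ∀ Y : C, Ω Y ⊣ forgetBeck Y) (X : C)
    (hz : IsZero ((Ω X).obj (Over.mk (𝟙 X)))) :
    FormallyUnramified X :=
  formallyUnramified_of_isZero_kaehler_general (adj X) hz
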